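/- Let Ñ ≥ 5 be an integer, define α_Ñ = 2k_c − 1 − 2·s_{k_c−1}/(s_{k_c} − s_{k_c−1}), and let K_c ∈ (1/4, 1/2) be the unique root of 4πK + sin(4πK) − 4 sin(2πK) = 0 in that interval. Then α_Ñ/Ñ ≤ 2K_c + 2/Ñ + 4π/(3Ñ²). Moreover, for every integer m ≥ 1 the maximum connectivity μ^{(mÑ,m)} of the feasible vectors for (mÑ, m) satisfies μ^{(mÑ,m)} ≤ α_Ñ/Ñ, and μ^{(mÑ,m)} → α_Ñ/Ñ as m → ∞. -/

import Mathlib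

open Real Finset Filter

/-- `x : ℕ → ℝ` is a feasible vector for `(N, p)`. -/
def feasible (N p : ℕ) (x : ℕ → ℝ) : Prop :=
  (∀ l ∈ Finset.Icc 1 (N - 1), x l = 0 ∨ x l = 1) ∧
  (∀ l ∈ Finset.Icc 1 (N - 1), x l = x (N - l)) ∧
  (∀ k ∈ Finset.Icc 1 (N - 1),
    ∑ l ∈ Finset.Icc 1 (N - 1),
      x l * Real.cos (2 * π * p * l / N) * (-1 + Real.cos (2 * π * k * l / N)) < 0)


noncomputable def cc (n l : ℕ) : ℝ := Real.cos (2 * π * l / n)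
noncomputable def ff (n l : ℕ) : ℝ := cc n l * (-1 + cc n l)

lemma cos_sum_zero (N : ℕ) (hN : 0 < N) (a : ℤ) (ha : ¬ (N : ℤ) ∣ a) :
    ∑ l ∈ range N, Real.cos (2 * π * a * l / N) = 0 := by
  have hN' : (N : ℝ) ≠ 0 := by positivity
  have hs : Real.sin (π * a / N) ≠ 0 := by
    intro h
    rw [Real.sin_eq_zero_iff] at h
    obtain ⟨n, hn⟩ := h
    apply ha
    refine ⟨n, ?_⟩
    have : (a : ℝ) = N * n := by
      field_simp at hn
      have hp := Real.pi_pos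
      linarith
    exact_mod_cast this
  have key : ∀ n : ℕ, 2 * Real.sin (π * a / N) * ∑ l ∈ range n, Real.cos (2 * π * a * l / N)
      = Real.sin ((2 * n - 1) * (π * a / N)) + Real.sin (π * a / N) := by
    intro n
    induction n with
    | zero => simp
    | succ k ih =>
      rw [Finset.sum_range_succ, mul_add, ih]
      push_cast
      have e1 : (2 * ((k : ℝ) + 1) - 1) * (π * a / N) = 2 * π * a * k / N + π * a / N := by ring
      have e2 : (2 * (k : ℝ) - 1) * (π * a / N) = 2 * π * a * k / N - π * a / N := by ring
      rw [e1, e2, Real.sin_add, Real.sin_sub]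
      ring
  have h := key N
  have e : (2 * (N : ℝ) - 1) * (π * a / N) = - (π * a / N) + a * (2 * π) := by
    field_simp
    ring
  rw [e, Real.sin_add_int_mul_two_pi, Real.sin_neg] at h
  have h2 : 2 * Real.sin (π * a / N) * ∑ l ∈ range N, Real.cos (2 * π * a * l / N) = 0 := by
    rw [h]; ring
  rcases mul_eq_zero.1 h2 with h3 | h3
  · exact absurd (by linarith) hs
  · exact h3

lemma closed_form (n : ℕ) (hn : 5 ≤ n) (h : ℝ) (hh : h = 2 * π / n) (k : ℕ) :
    4 * ∑ l ∈ Icc 1 k, ff n l = 2 * k + 1 + Real.sin ((2 * k + 1) * h) / Real.sin h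
      - 2 * Real.sin ((k + 1 / 2) * h) / Real.sin (h / 2) := by
  have hn' : (5 : ℝ) ≤ n := by exact_mod_cast hn
  have h0 : 0 < h := by rw [hh]; positivity
  have h1 : h < π := by
    rw [hh, div_lt_iff₀ (by positivity)]
    nlinarith [Real.pi_pos]
  have s1 : Real.sin h ≠ 0 := (Real.sin_pos_of_pos_of_lt_pi h0 h1).ne'
  have s2 : Real.sin (h / 2) ≠ 0 := (Real.sin_pos_of_pos_of_lt_pi (by linarith) (by linarith)).ne'
  induction k with
  | zero =>
    simp
    rw [show (2:ℝ)⁻¹ * h = h / 2 by ring]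
    field_simp
    ring
  | succ k ih =>
    rw [Finset.sum_Icc_succ_top (by omega), mul_add, ih]
    have e : cc n (k + 1) = Real.cos ((k + 1) * h) := by
      unfold cc; congr 1; rw [hh]; push_cast; ring
    have e1 : (2 * ((k + 1 : ℕ) : ℝ) + 1) * h = 2 * ((k + 1) * h) + h := by push_cast; ring
    have e2 : (2 * (k : ℝ) + 1) * h = 2 * ((k + 1) * h) - h := by ring
    have e3 : (((k + 1 : ℕ) : ℝ) + 1 / 2) * h = (k + 1) * h + h / 2 := by push_cast; ring
    have e4 : ((k : ℝ) + 1 / 2) * h = (k + 1) * h - h / 2 := by ring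
    rw [e1, e2, e3, e4, Real.sin_add, Real.sin_sub, Real.sin_add, Real.sin_sub, Real.cos_two_mul]
    unfold ff
    rw [e]
    push_cast
    field_simp
    ring

lemma cc_le (n l : ℕ) : cc n l ≤ 1 := Real.cos_le_one _

lemma cc_zero (n : ℕ) : cc n 0 = 1 := by simp [cc]
lemma ff_zero (n : ℕ) : ff n 0 = 0 := by simp [ff, cc_zero]

lemma cc_per (n t j : ℕ) (hn : 0 < n) : cc n (t * n + j) = cc n j := by
  unfold cc
  have hN' : (n : ℝ) ≠ 0 := by positivity
  rw [show 2 * π * ((t * n + j : ℕ) : ℝ) / n = 2 * π * j / n + t * (2 * π) by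
    push_cast; field_simp; ring, Real.cos_add_nat_mul_two_pi]

lemma cc_refl (n j : ℕ) (hn : 0 < n) (hj : j ≤ n) : cc n (n - j) = cc n j := by
  unfold cc
  have hN' : (n : ℝ) ≠ 0 := by positivity
  rw [show 2 * π * ((n - j : ℕ) : ℝ) / n = 2 * π - 2 * π * j / n by
    push_cast [hj]; field_simp, Real.cos_two_pi_sub]

lemma cc_anti (n i j : ℕ) (hn : 0 < n) (hij : i ≤ j) (hj : 2 * j ≤ n) : cc n j ≤ cc n i := by
  unfold cc
  have hN' : (0 : ℝ) < n := by positivity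
  have hp := Real.pi_pos
  apply Real.cos_le_cos_of_nonneg_of_le_pi
  · positivity
  · rw [div_le_iff₀ hN']
    have : (2 * j : ℝ) ≤ n := by exact_mod_cast hj
    nlinarith
  · gcongr

lemma kc_facts (n : ℕ) (hn : 5 ≤ n) (kc : ℕ)
    (hkc : IsLeast {k | k ∈ Icc 1 (n - 1) ∧ 0 ≤ ∑ l ∈ Icc 1 k, ff n l} kc) :
    2 ≤ kc ∧ 2 * kc < n ∧ ∑ l ∈ Icc 1 (kc - 1), ff n l < 0 ∧ 0 ≤ ∑ l ∈ Icc 1 kc, ff n l ∧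
      ∑ l ∈ Icc 1 kc, ff n l = ∑ l ∈ Icc 1 (kc - 1), ff n l + ff n kc ∧ 0 < ff n kc := by
  obtain ⟨⟨h1, h2⟩, h3⟩ := hkc
  rw [Finset.mem_Icc] at h1
  have hn' : (5 : ℝ) ≤ n := by exact_mod_cast hn
  have hp := Real.pi_pos
  have hsucc : ∑ l ∈ Icc 1 kc, ff n l = ∑ l ∈ Icc 1 (kc - 1), ff n l + ff n kc := by
    obtain ⟨k, rfl⟩ : ∃ k, kc = k + 1 := ⟨kc - 1, by omega⟩
    rw [Finset.sum_Icc_succ_top (by omega)]; simp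
  have k2 : 2 ≤ kc := by
    by_contra hlt
    have : kc = 1 := by omega
    subst this
    simp at h2
    have hpos : 0 < cc n 1 := by
      unfold cc
      apply Real.cos_pos_of_mem_Ioo
      constructor
      · have : (0:ℝ) < 2 * π * (1:ℕ) / n := by positivity
        linarith
      · rw [div_lt_iff₀ (by positivity)]; push_cast; nlinarith
    have hlt1 : cc n 1 < 1 := by
      unfold cc
      rw [← Real.cos_zero]
      apply Real.cos_lt_cos_of_nonneg_of_le_pi le_rfl
      · rw [div_le_iff₀ (by positivity)]; push_cast; nlinarith
      · positivity
    unfold ff at h2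
    nlinarith
  have kn : 2 * kc < n := by
    have hK : ∀ K : ℕ, n = 2 * K + 1 ∨ n = 2 * K + 2 → 0 ≤ ∑ l ∈ Icc 1 K, ff n l := by
      intro K hK
      have cf := closed_form n hn (2 * π / n) rfl K
      have h0 : 0 < 2 * π / n := by positivity
      have hlt : 2 * π / n < π := by
        rw [div_lt_iff₀ (by positivity)]
        nlinarith [Real.pi_pos]
      have s1 : Real.sin (2 * π / n) ≠ 0 := (Real.sin_pos_of_pos_of_lt_pi h0 hlt).ne'
      have s2 : Real.sin (2 * π / n / 2) ≠ 0 :=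
        (Real.sin_pos_of_pos_of_lt_pi (by linarith) (by linarith)).ne'
      have hnn : (n : ℝ) ≠ 0 := by positivity
      rcases hK with hK | hK
      · have hr : (n : ℝ) = 2 * K + 1 := by exact_mod_cast hK
        have e1 : (2 * (K : ℝ) + 1) * (2 * π / n) = 2 * π := by rw [← hr]; field_simp
        have e2 : ((K : ℝ) + 1 / 2) * (2 * π / n) = π := by linarith
        rw [e1, e2] at cf
        simp at cf
        have : (0:ℝ) ≤ K := by positivity
        linarith
      · have hr : (n : ℝ) = 2 * K + 2 := by exact_mod_cast hK
        have e1 : (2 * (K : ℝ) + 1) * (2 * π / n) = 2 * π - 2 * π / n := by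
          rw [show (2 * (K : ℝ) + 1) = n - 1 by linarith]; field_simp
        have e2 : ((K : ℝ) + 1 / 2) * (2 * π / n) = π - 2 * π / n / 2 := by linarith
        rw [e1, e2, Real.sin_two_pi_sub, Real.sin_pi_sub, neg_div, div_self s1, mul_div_assoc,
          div_self s2] at cf
        linarith
    have := h3 (show (n - 1) / 2 ∈ _ from ⟨by rw [Finset.mem_Icc]; omega, hK _ (by omega)⟩)
    omega
  have hneg : ∑ l ∈ Icc 1 (kc - 1), ff n l < 0 := by
    by_contra hge
    have := h3 (show kc - 1 ∈ _ from ⟨by rw [Finset.mem_Icc]; omega, not_lt.1 hge⟩)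
    omega
  exact ⟨k2, kn, hneg, h2, hsucc, by linarith⟩

lemma aux_mul (a y b : ℝ) (ha : 0 ≤ a) (hab : a ≤ b) (hy : -1 ≤ y) : -b ≤ a * y := by
  nlinarith

set_option maxHeartbeats 2000000 in
lemma part1 (n : ℕ) (hn : 5 ≤ n) (k : ℕ) (hk : 2 * (k + 1) < n) (u : ℝ)
    (hu : u ∈ Set.Ioo (π / 2) π) (hu0 : 2 * u + Real.sin (2 * u) - 4 * Real.sin u = 0)
    (hneg : ∑ l ∈ Icc 1 k, ff n l < 0) :
    (k + 1 / 2) * (2 * π / n) < u + (2 * π / n) ^ 2 / 3 := by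
  by_contra hcon
  push Not at hcon
  obtain ⟨h, hh⟩ : ∃ h, h = 2 * π / (n : ℝ) := ⟨_, rfl⟩
  rw [← hh] at hcon
  have hn' : (5 : ℝ) ≤ n := by exact_mod_cast hn
  have hp := Real.pi_pos
  have h0 : 0 < h := by rw [hh]; positivity
  have h1 : h ≤ 1.26 := by
    rw [hh, div_le_iff₀ (by positivity)]
    nlinarith [Real.pi_lt_d2]
  have cf := closed_form n hn h hh k
  obtain ⟨x, hx⟩ : ∃ x, x = ((k:ℝ) + 1 / 2) * h := ⟨_, rfl⟩
  rw [show (2 * (k:ℝ) + 1) * h = 2 * x by rw [hx]; ring, ← hx] at cf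
  rw [← hx] at hcon
  have hxpi : x ≤ π := by
    have : (2 * (k + 1) : ℝ) ≤ n := by exact_mod_cast hk.le
    rw [hx, hh, mul_div_assoc', div_le_iff₀ (by positivity)]
    nlinarith
  -- G
  have hd : ∀ y, HasDerivAt (fun y => 2 * y + Real.sin (2 * y) - 4 * Real.sin y)
      (4 * (Real.cos y * (Real.cos y - 1))) y := by
    intro y
    have a1 : HasDerivAt (fun y : ℝ => 2 * y) 2 y := by simpa using (hasDerivAt_id y).const_mul 2
    have := ((a1.add a1.sin).sub ((Real.hasDerivAt_sin y).const_mul 4))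
    refine this.congr_deriv ?_
    rw [Real.cos_two_mul]; ring
  have hmono : StrictMonoOn (fun y => 2 * y + Real.sin (2 * y) - 4 * Real.sin y)
      (Set.Icc (π / 2) π) := by
    apply strictMonoOn_of_deriv_pos (convex_Icc _ _)
    · exact fun y _ => (hd y).continuousAt.continuousWithinAt
    · intro y hy
      rw [interior_Icc] at hy
      rw [(hd y).deriv]
      have : Real.cos y < 0 := Real.cos_neg_of_pi_div_two_lt_of_lt hy.1 (by linarith [hy.2])
      nlinarith
  have hu23 : 2 * π / 3 < u := by
    by_contra hle
    have := hmono.monotoneOn (show u ∈ _ from ⟨hu.1.le, hu.2.le⟩)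
      (show 2 * π / 3 ∈ Set.Icc (π / 2) π from ⟨by linarith, by linarith⟩) (not_lt.1 hle)
    simp only [hu0] at this
    rw [show 2 * (2 * π / 3) = π / 3 + π by ring, Real.sin_add_pi,
      show 2 * π / 3 = π - π / 3 by ring, Real.sin_pi_sub, Real.sin_pi_div_three] at this
    have h3 : (1.73 : ℝ) ≤ √3 := Real.le_sqrt_of_sq_le (by norm_num)
    linarith [Real.pi_lt_d2]
  have hmono2 : MonotoneOn (fun y => (2 * y + Real.sin (2 * y) - 4 * Real.sin y) - 3 * y)
      (Set.Icc (2 * π / 3) π) := by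
    have hd2 : ∀ y, HasDerivAt (fun y => (2 * y + Real.sin (2 * y) - 4 * Real.sin y) - 3 * y)
      (4 * (Real.cos y * (Real.cos y - 1)) - 3) y := by
      intro y
      have a1 : HasDerivAt (fun y : ℝ => 3 * y) 3 y := by
        simpa using (hasDerivAt_id y).const_mul 3
      exact (hd y).sub a1
    apply monotoneOn_of_deriv_nonneg (convex_Icc _ _)
    · exact fun y _ => (hd2 y).continuousAt.continuousWithinAt
    · exact fun y _ => (hd2 y).differentiableAt.differentiableWithinAt
    · intro y hy
      rw [interior_Icc] at hy
      rw [(hd2 y).deriv]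
      have h23 : Real.cos (2 * π / 3) = - (1 / 2) := by
        rw [show 2 * π / 3 = π - π / 3 by ring, Real.cos_pi_sub, Real.cos_pi_div_three]
      have : Real.cos y ≤ Real.cos (2 * π / 3) :=
        Real.cos_le_cos_of_nonneg_of_le_pi (by positivity) hy.2.le hy.1.le
      nlinarith
  have hux : u ≤ x := by nlinarith
  have hG := hmono2 (show u ∈ _ from ⟨hu23.le, hu.2.le⟩)
    (show x ∈ Set.Icc (2 * π / 3) π from ⟨by linarith, hxpi⟩) hux
  simp only [hu0] at hG
  have hG2 : h ^ 2 ≤ 2 * x + Real.sin (2 * x) - 4 * Real.sin x := by linarith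
  -- sine bounds
  have sh2 : h / 2 * (1 - h ^ 2 / 16) ≤ Real.sin (h / 2) := by
    have := Real.sin_gt_sub_cube (x := h / 2) (by linarith)
    nlinarith
  have ch2 : 1 - h ^ 2 / 8 ≤ Real.cos (h / 2) := by
    have := Real.one_sub_sq_div_two_le_cos (x := h / 2)
    nlinarith
  have hsq : h ^ 2 ≤ 1.6 := by nlinarith
  have sh : h * (1 - 3 * h ^ 2 / 16) ≤ Real.sin h := by
    have e : Real.sin h = 2 * Real.sin (h / 2) * Real.cos (h / 2) := by
      rw [← Real.sin_two_mul]; congr 1; ring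
    have : h / 2 * (1 - h ^ 2 / 16) * (1 - h ^ 2 / 8) ≤ Real.sin (h / 2) * Real.cos (h / 2) :=
      mul_le_mul sh2 ch2 (by linarith) (le_trans (mul_nonneg (by linarith) (by linarith)) sh2)
    have h5 : 0 ≤ h * (h ^ 2) ^ 2 := by positivity
    rw [e]
    nlinarith
  have sp2 : 0 < Real.sin (h / 2) := lt_of_lt_of_le (mul_pos (by linarith) (by linarith)) sh2
  have sp : 0 < Real.sin h := lt_of_lt_of_le (mul_pos (by linarith) (by linarith)) sh
  have ba : h / Real.sin h ≤ 1 + h ^ 2 / 2 := by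
    rw [div_le_iff₀ sp]
    have : 1 ≤ (1 + h ^ 2 / 2) * (1 - 3 * h ^ 2 / 16) := by nlinarith [sq_nonneg h]
    have := mul_le_mul_of_nonneg_left sh (show 0 ≤ 1 + h ^ 2 / 2 by positivity)
    nlinarith
  have bb : (h / 2) / Real.sin (h / 2) ≤ 1 + h ^ 2 / 8 := by
    rw [div_le_iff₀ sp2]
    have : 1 ≤ (1 + h ^ 2 / 8) * (1 - h ^ 2 / 16) := by nlinarith [sq_nonneg h]
    have := mul_le_mul_of_nonneg_left sh2 (show 0 ≤ 1 + h ^ 2 / 8 by positivity)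
    nlinarith
  have la : 1 ≤ h / Real.sin h := by
    rw [le_div_iff₀ sp]; linarith [Real.sin_lt h0]
  have lb : 1 ≤ (h / 2) / Real.sin (h / 2) := by
    rw [le_div_iff₀ sp2]; linarith [Real.sin_lt (show 0 < h / 2 by linarith)]
  have cf2 : h * (4 * ∑ l ∈ Icc 1 k, ff n l) = 2 * x + (h / Real.sin h) * Real.sin (2 * x)
      - 4 * ((h / 2) / Real.sin (h / 2)) * Real.sin x := by
    rw [cf, hx]; field_simp; ring
  have i1 := aux_mul (h / Real.sin h - 1) (Real.sin (2 * x)) (h ^ 2 / 2)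
    (by linarith) (by linarith) (Real.neg_one_le_sin _)
  have i2 := aux_mul ((h / 2) / Real.sin (h / 2) - 1) (- Real.sin x) (h ^ 2 / 8)
    (by linarith) (by linarith) (by linarith [Real.sin_le_one x])
  have hlt : h * (4 * ∑ l ∈ Icc 1 k, ff n l) < 0 := mul_neg_of_pos_of_neg h0 (by linarith)
  rw [cf2] at hlt
  linarith

lemma sum_blocks (m n : ℕ) (g : ℕ → ℝ) :
    ∑ l ∈ range (m * n), g l = ∑ t ∈ range m, ∑ j ∈ range n, g (t * n + j) := by
  induction m with
  | zero => simp
  | succ m ih => rw [Nat.succ_mul, Finset.sum_range_add, ih, Finset.sum_range_succ]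

lemma sum_Icc_range (N : ℕ) (hN : 0 < N) (g : ℕ → ℝ) :
    ∑ l ∈ Icc 1 (N - 1), g l = ∑ l ∈ range N, g l - g 0 := by
  have : range N = insert 0 (Icc 1 (N - 1)) := by
    ext l; simp only [mem_range, mem_insert, mem_Icc]; omega
  rw [this, Finset.sum_insert (by simp)]; ring

lemma sum_split (n k : ℕ) (hk : 1 ≤ k) (hkn : 2 * k < n) (F : ℕ → ℝ)
    (hF : ∀ j, 1 ≤ j → j < k → F (n - j) = F j) :
    ∑ j ∈ range n, F j = F 0 + 2 * ∑ j ∈ Icc 1 (k - 1), F j + ∑ j ∈ Icc k (n - k), F j := by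
  have h1 : ∑ j ∈ Icc (n - k + 1) (n - 1), F j = ∑ j ∈ Icc 1 (k - 1), F j := by
    apply Finset.sum_bij' (fun j _ => n - j) (fun j _ => n - j)
    · intro a ha; rw [mem_Icc] at *; omega
    · intro a ha; rw [mem_Icc] at *; omega
    · intro a ha; rw [mem_Icc] at *; omega
    · intro a ha; rw [mem_Icc] at *; omega
    · intro a ha
      rw [mem_Icc] at ha
      rw [← hF (n - a) (by omega) (by omega)]
      congr 1; omega
  have h2 : range n = insert 0 (Icc 1 (k - 1)) ∪ (Icc k (n - k) ∪ Icc (n - k + 1) (n - 1)) := by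
    ext l; simp only [mem_range, mem_insert, mem_Icc, mem_union]; omega
  rw [h2, Finset.sum_union, Finset.sum_union, Finset.sum_insert, h1]
  · ring
  · simp
  · rw [Finset.disjoint_left]; intro a; simp only [mem_Icc]; omega
  · rw [Finset.disjoint_left]; intro a; simp only [mem_Icc, mem_insert, mem_union]; omega

lemma cc_mod (n l : ℕ) (hn : 0 < n) : cc n l = cc n (l % n) := by
  conv_lhs => rw [← Nat.div_add_mod' l n]
  exact cc_per n _ _ hn

lemma ff_per (n t j : ℕ) (hn : 0 < n) : ff n (t * n + j) = ff n j := by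
  unfold ff; rw [cc_per n t j hn]

lemma ff_refl (n j : ℕ) (hn : 0 < n) (hj : j ≤ n) : ff n (n - j) = ff n j := by
  unfold ff; rw [cc_refl n j hn hj]

lemma cc_neg_of_ff (n k : ℕ) (h : 0 < ff n k) : cc n k < 0 := by
  unfold ff at h
  have := cc_le n k
  by_contra hc
  nlinarith

lemma cc_mid (n k j : ℕ) (hk : 2 * k < n) (h1 : k ≤ j) (h2 : j ≤ n - k) : cc n j ≤ cc n k := by
  by_cases h : 2 * j ≤ n
  · exact cc_anti n k j (by omega) h1 h
  · rw [← cc_refl n j (by omega) (by omega)]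
    exact cc_anti n k (n - j) (by omega) (by omega) (by omega)

lemma ff_mid (n k j : ℕ) (hk : 2 * k < n) (hf : 0 < ff n k) (h1 : k ≤ j) (h2 : j ≤ n - k) :
    ff n k ≤ ff n j := by
  have a := cc_mid n k j hk h1 h2
  have b := cc_neg_of_ff n k hf
  unfold ff
  nlinarith

lemma ff_low (n k j : ℕ) (hk : 2 * k < n) (hf : 0 < ff n k) (h1 : j ≤ k) :
    ff n j ≤ ff n k := by
  have a := cc_anti n j k (by omega) h1 hk.le
  have b := cc_neg_of_ff n k hf
  have c := cc_le n j
  by_cases h : 0 ≤ cc n j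
  · have : ff n j ≤ 0 := by unfold ff; nlinarith
    linarith
  · unfold ff; nlinarith

lemma cos_p (m n l : ℕ) (hm : 1 ≤ m) (hn : 0 < n) :
    Real.cos (2 * π * (m : ℕ) * l / ((m * n : ℕ) : ℝ)) = cc n l := by
  unfold cc
  have : (m : ℝ) ≠ 0 := by positivity
  have : (n : ℝ) ≠ 0 := by positivity
  congr 1; push_cast; field_simp

lemma upper (n : ℕ) (k : ℕ) (hk1 : 1 ≤ k) (hk : 2 * k < n) (hf : 0 < ff n k)
    (m : ℕ) (hm : 1 ≤ m) (x : ℕ → ℝ) (hx : feasible (m * n) m x) :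
    ∑ l ∈ Icc 1 (m * n - 1), x l ≤
      m * (2 * (k : ℝ) - 1 - 2 * (∑ l ∈ Icc 1 (k - 1), ff n l) / ff n k) - 1 := by
  obtain ⟨hx1, -, hx3⟩ := hx
  have hn : 0 < n := by omega
  have hmn : n ≤ m * n := Nat.le_mul_of_pos_left n hm
  have hmn2 : m * 2 ≤ m * n := Nat.mul_le_mul_left m (by omega)
  have h := hx3 m (by rw [mem_Icc]; omega)
  have h' : ∑ l ∈ Icc 1 (m * n - 1), x l * ff n l < 0 := by
    refine lt_of_eq_of_lt (Finset.sum_congr rfl fun l _ => ?_) h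
    rw [cos_p m n l hm hn]; unfold ff; ring
  have e1 : ∀ l ∈ Icc 1 (m * n - 1), x l ≤ max (1 - ff n l / ff n k) 0 + x l * ff n l / ff n k := by
    intro l hl
    rcases hx1 l hl with h0 | h0 <;> rw [h0]
    · simp
    · rw [one_mul]
      linarith [le_max_left (1 - ff n l / ff n k) 0]
  have e2 := Finset.sum_le_sum e1
  rw [Finset.sum_add_distrib, ← Finset.sum_div] at e2
  have e3 : (∑ l ∈ Icc 1 (m * n - 1), x l * ff n l) / ff n k < 0 := div_neg_of_neg_of_pos h' hf
  have e4 : ∑ l ∈ Icc 1 (m * n - 1), max (1 - ff n l / ff n k) 0 =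
      m * (2 * (k : ℝ) - 1 - 2 * (∑ l ∈ Icc 1 (k - 1), ff n l) / ff n k) - 1 := by
    rw [sum_Icc_range _ (by omega), sum_blocks]
    simp only [ff_per n _ _ hn, Finset.sum_const, card_range, nsmul_eq_mul, ff_zero]
    rw [sum_split n k hk1 hk _ (fun j h1 h2 => by rw [ff_refl n j hn (by omega)])]
    have a1 : ∑ j ∈ Icc k (n - k), max (1 - ff n j / ff n k) 0 = 0 := by
      apply Finset.sum_eq_zero
      intro j hj
      rw [mem_Icc] at hj
      apply max_eq_right
      rw [sub_nonpos, le_div_iff₀ hf, one_mul]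
      exact ff_mid n k j hk hf hj.1 hj.2
    have a2 : ∑ j ∈ Icc 1 (k - 1), max (1 - ff n j / ff n k) 0 =
        ∑ j ∈ Icc 1 (k - 1), (1 - ff n j / ff n k) := by
      apply Finset.sum_congr rfl
      intro j hj
      rw [mem_Icc] at hj
      apply max_eq_left
      rw [sub_nonneg, div_le_iff₀ hf, one_mul]
      exact ff_low n k j hk hf (by omega)
    rw [a1, a2, Finset.sum_sub_distrib, ← Finset.sum_div]
    simp [ff_zero]
    push_cast [hk1]
    left
    ring
  linarith

open Classical in
noncomputable def xx (m n k r l : ℕ) : ℝ :=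
  (if l % n < k ∨ n - k < l % n then 1 else 0) +
  (if l % n = k ∧ 1 ≤ l / n ∧ l / n ≤ r then 1 else 0) +
  (if l % n = n - k ∧ l / n + 2 ≤ m ∧ m ≤ l / n + 1 + r then 1 else 0)

lemma xx01 (m n k r l : ℕ) (hk : 2 * k < n) :
    (xx m n k r l = 0 ∧ k ≤ l % n ∧ l % n ≤ n - k) ∨ xx m n k r l = 1 := by
  unfold xx
  by_cases h1 : l % n < k ∨ n - k < l % n
  · right
    rw [if_pos h1, if_neg (by omega), if_neg (by omega)]; norm_num
  · rw [if_neg h1]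
    by_cases h2 : l % n = k ∧ 1 ≤ l / n ∧ l / n ≤ r
    · right; rw [if_pos h2, if_neg (by omega)]; norm_num
    · rw [if_neg h2]
      by_cases h3 : l % n = n - k ∧ l / n + 2 ≤ m ∧ m ≤ l / n + 1 + r
      · right; rw [if_pos h3]; norm_num
      · left; rw [if_neg h3]; refine ⟨by norm_num, by omega, by omega⟩

lemma xx_symm (m n k r l : ℕ) (hk1 : 1 ≤ k) (hk : 2 * k < n)
    (hl : l ∈ Icc 1 (m * n - 1)) : xx m n k r l = xx m n k r (m * n - l) := by
  rw [mem_Icc] at hl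
  have hn : 0 < n := by omega
  obtain ⟨t, j, hj, rfl⟩ : ∃ t j, j < n ∧ l = n * t + j :=
    ⟨l / n, l % n, Nat.mod_lt _ hn, (Nat.div_add_mod l n).symm⟩
  have ht : t < m := by
    by_contra hc
    have : n * m ≤ n * t := Nat.mul_le_mul_left n (not_lt.1 hc)
    rw [mul_comm m n] at hl
    omega
  obtain ⟨q, rfl⟩ : ∃ q, m = t + 1 + q := ⟨m - t - 1, by omega⟩
  have d1 : (n * t + j) / n = t := by
    rw [Nat.mul_add_div hn, Nat.div_eq_of_lt hj, add_zero]
  have m1 : (n * t + j) % n = j := by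
    rw [Nat.mul_add_mod, Nat.mod_eq_of_lt hj]
  by_cases hj0 : j = 0
  · subst hj0
    have e : (t + 1 + q) * n - (n * t + 0) = n * (q + 1) + 0 := by
      rw [Nat.sub_eq_iff_eq_add]
      · ring
      · nlinarith
    have m2 : (n * (q + 1) + 0) % n = 0 := by simp
    unfold xx
    rw [e, m1, m2]
    rw [if_pos (by omega), if_neg (by omega), if_neg (by omega), if_neg (by omega), if_neg (by omega)]
  · have e : (t + 1 + q) * n - (n * t + j) = n * q + (n - j) := by
      obtain ⟨i, rfl⟩ : ∃ i, n = j + i := ⟨n - j, by omega⟩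
      rw [Nat.sub_eq_iff_eq_add]
      · rw [Nat.add_sub_cancel_left]; ring
      · nlinarith
    have d2 : (n * q + (n - j)) / n = q := by
      rw [Nat.mul_add_div hn, Nat.div_eq_of_lt (by omega), add_zero]
    have m2 : (n * q + (n - j)) % n = n - j := by
      rw [Nat.mul_add_mod, Nat.mod_eq_of_lt (by omega)]
    unfold xx
    rw [e, m1, m2, d1, d2]
    have i1 : (j < k ∨ n - k < j) ↔ (n - j < k ∨ n - k < n - j) := by omega
    have i2 : (j = k ∧ 1 ≤ t ∧ t ≤ r) ↔
      (n - j = n - k ∧ q + 2 ≤ t + 1 + q ∧ t + 1 + q ≤ q + 1 + r) := by omega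
    have i3 : (j = n - k ∧ t + 2 ≤ t + 1 + q ∧ t + 1 + q ≤ t + 1 + r) ↔
      (n - j = k ∧ 1 ≤ q ∧ q ≤ r) := by omega
    simp only [i1, i2, i3]
    ring

lemma xx_sum (m n k r : ℕ) (hk1 : 1 ≤ k) (hk : 2 * k < n) (hr : r + 2 ≤ m) (F : ℕ → ℝ)
    (hF : ∀ t j, F (t * n + j) = F j) (hF2 : ∀ j, j ≤ n → F (n - j) = F j) :
    ∑ l ∈ range (m * n), xx m n k r l * F l =
      m * (F 0 + 2 * ∑ j ∈ Icc 1 (k - 1), F j) + 2 * r * F k := by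
  have hn : 0 < n := by omega
  rw [sum_blocks]
  have e : ∀ t ∈ range m, ∑ j ∈ range n, xx m n k r (t * n + j) * F (t * n + j) =
      (F 0 + 2 * ∑ j ∈ Icc 1 (k - 1), F j) + (if 1 ≤ t ∧ t ≤ r then 1 else 0) * F k +
       (if t + 2 ≤ m ∧ m ≤ t + 1 + r then 1 else 0) * F k := by
    intro t _
    have e1 : ∀ j ∈ range n, xx m n k r (t * n + j) * F (t * n + j) =
        (if j < k ∨ n - k < j then F j else 0) +
        (if j = k then (if 1 ≤ t ∧ t ≤ r then 1 else 0) * F k else 0) +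
        (if j = n - k then (if t + 2 ≤ m ∧ m ≤ t + 1 + r then 1 else 0) * F k else 0) := by
      intro j hj
      rw [mem_range] at hj
      have d1 : (t * n + j) / n = t := by
        rw [mul_comm, Nat.mul_add_div hn, Nat.div_eq_of_lt hj, add_zero]
      have m1 : (t * n + j) % n = j := by
        rw [mul_comm, Nat.mul_add_mod, Nat.mod_eq_of_lt hj]
      rw [hF]
      unfold xx
      rw [d1, m1, add_mul, add_mul]
      congr 1
      · congr 1
        · split_ifs <;> simp
        · by_cases hjk : j = k
          · subst hjk; simp
          · simp [hjk]
      · by_cases hjk : j = n - k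
        · subst hjk; rw [hF2 k (by omega)]; simp
        · simp [hjk]
    rw [Finset.sum_congr rfl e1, Finset.sum_add_distrib, Finset.sum_add_distrib,
      Finset.sum_ite_eq', Finset.sum_ite_eq', if_pos (mem_range.2 (show k < n by omega)),
      if_pos (mem_range.2 (show n - k < n by omega)), sum_split n k hk1 hk]
    · congr 2
      rw [if_pos (by omega)]
      have z : ∑ j ∈ Icc k (n - k), (if j < k ∨ n - k < j then F j else 0) = 0 := by
        apply Finset.sum_eq_zero
        intro j hj; rw [mem_Icc] at hj; rw [if_neg (by omega)]
      rw [z, add_zero]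
      congr 2
      apply Finset.sum_congr rfl
      intro j hj; rw [mem_Icc] at hj; rw [if_pos (by omega)]
    · intro j h1 h2
      rw [if_pos (by omega), if_pos (by omega), hF2 j (by omega)]
  rw [Finset.sum_congr rfl e, Finset.sum_add_distrib, Finset.sum_add_distrib, ← Finset.sum_mul,
    ← Finset.sum_mul, Finset.sum_boole, Finset.sum_boole]
  have c1 : (range m).filter (fun t => 1 ≤ t ∧ t ≤ r) = Icc 1 r := by
    ext t; simp only [mem_filter, mem_range, mem_Icc]; omega
  have c2 : (range m).filter (fun t => t + 2 ≤ m ∧ m ≤ t + 1 + r) = Icc (m - 1 - r) (m - 2) := by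
    ext t; simp only [mem_filter, mem_range, mem_Icc]; omega
  rw [c1, c2, Nat.card_Icc, Nat.card_Icc, show m - 2 + 1 - (m - 1 - r) = r by omega]
  simp
  ring

lemma full_sum (m n k : ℕ) (hm : 1 ≤ m) (hn : 3 ≤ n) (hk : k ∈ Icc 1 (m * n - 1))
    (h1 : k ≠ m) (h2 : k ≠ m * n - m) :
    ∑ l ∈ range (m * n), cc n l * (-1 + Real.cos (2 * π * k * l / ((m * n : ℕ) : ℝ))) = 0 := by
  rw [mem_Icc] at hk
  have hmn : m * 3 ≤ m * n := Nat.mul_le_mul_left m hn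
  have A := cos_sum_zero (m * n) (by omega) (m : ℤ) (by
    rw [Int.natCast_dvd_natCast]; intro h; have := Nat.le_of_dvd (by omega) h; omega)
  have B := cos_sum_zero (m * n) (by omega) ((m : ℤ) + k) (by
    rintro ⟨c, hc⟩
    have c0 : 0 < c := by
      by_contra h
      have : ((m * n : ℕ) : ℤ) * c ≤ 0 := mul_nonpos_of_nonneg_of_nonpos (by positivity) (by omega)
      omega
    have c2 : c < 2 := by
      by_contra h
      have : ((m * n : ℕ) : ℤ) * 2 ≤ ((m * n : ℕ) : ℤ) * c :=
        mul_le_mul_of_nonneg_left (by omega) (by positivity)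
      omega
    have : c = 1 := by omega
    subst this
    omega)
  have C := cos_sum_zero (m * n) (by omega) ((m : ℤ) - k) (by
    intro h
    have := Int.eq_zero_of_abs_lt_dvd h (by rw [abs_lt]; constructor <;> omega)
    omega)
  have e : ∀ l ∈ range (m * n), cc n l * (-1 + Real.cos (2 * π * k * l / ((m * n : ℕ) : ℝ))) =
      - Real.cos (2 * π * (m : ℤ) * l / ((m * n : ℕ) : ℝ)) +
      (Real.cos (2 * π * (((m : ℤ) + k : ℤ) : ℝ) * l / ((m * n : ℕ) : ℝ)) +
      Real.cos (2 * π * (((m : ℤ) - k : ℤ) : ℝ) * l / ((m * n : ℕ) : ℝ))) / 2 := by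
    intro l _
    rw [← cos_p m n l hm (by omega)]
    rw [show 2 * π * (((m : ℤ) + k : ℤ) : ℝ) * l / ((m * n : ℕ) : ℝ) =
      2 * π * (m : ℕ) * l / ((m * n : ℕ) : ℝ) + 2 * π * k * l / ((m * n : ℕ) : ℝ) by push_cast; ring,
      show 2 * π * (((m : ℤ) - k : ℤ) : ℝ) * l / ((m * n : ℕ) : ℝ) =
      2 * π * (m : ℕ) * l / ((m * n : ℕ) : ℝ) - 2 * π * k * l / ((m * n : ℕ) : ℝ) by push_cast; ring,
      Real.cos_add, Real.cos_sub, Int.cast_natCast]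
    ring
  rw [Finset.sum_congr rfl e, Finset.sum_add_distrib, Finset.sum_neg_distrib, ← Finset.sum_div,
    Finset.sum_add_distrib, A, B, C]
  simp

lemma xx_feasible (m n k r : ℕ) (hk1 : 1 ≤ k) (hk : 2 * k < n) (hn5 : 5 ≤ n) (hr : r + 2 ≤ m)
    (hf : 0 < ff n k) (hlt : m * (∑ l ∈ Icc 1 (k - 1), ff n l) + r * ff n k < 0) :
    feasible (m * n) m (xx m n k r) := by
  have hm : 1 ≤ m := by omega
  have hn : 0 < n := by omega
  have hmn : m * 5 ≤ m * n := Nat.mul_le_mul_left m hn5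
  have hmnn : 2 * n ≤ m * n := Nat.mul_le_mul_right n (by omega)
  refine ⟨?_, ?_, ?_⟩
  · intro l _
    rcases xx01 m n k r l hk with h | h
    · exact Or.inl h.1
    · exact Or.inr h
  · intro l hl
    exact xx_symm m n k r l hk1 hk hl
  · intro q hq
    have hN0 : ((m * n : ℕ) : ℝ) ≠ 0 := by
      have : m * n ≠ 0 := by omega
      exact_mod_cast this
    simp only [cos_p m n _ hm hn]
    by_cases hqm : q = m ∨ q = m * n - m
    · have e : ∀ l ∈ Icc 1 (m * n - 1),
          xx m n k r l * cc n l * (-1 + Real.cos (2 * π * q * l / ((m * n : ℕ) : ℝ))) =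
          xx m n k r l * ff n l := by
        intro l _
        have : Real.cos (2 * π * q * l / ((m * n : ℕ) : ℝ)) = cc n l := by
          rcases hqm with h | h
          · rw [h, cos_p m n l hm hn]
          · rw [← cos_p m n l hm hn, h]
            rw [Nat.cast_sub (by omega)]
            rw [show 2 * π * (((m * n : ℕ) : ℝ) - m) * l / ((m * n : ℕ) : ℝ) =
              l * (2 * π) - 2 * π * (m : ℕ) * l / ((m * n : ℕ) : ℝ) by field_simp]
            rw [Real.cos_nat_mul_two_pi_sub]
        rw [this]; unfold ff; ring
      rw [Finset.sum_congr rfl e, sum_Icc_range _ (by omega),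
        xx_sum m n k r hk1 hk hr _ (fun t j => ff_per n t j hn) (fun j hj => ff_refl n j hn hj),
        ff_zero]
      linarith
    · push Not at hqm
      have fs := full_sum m n q hm (by omega) hq hqm.1 hqm.2
      rw [mem_Icc] at hq
      rw [sum_Icc_range _ (by omega)]
      have hneg := cc_neg_of_ff n k hf
      have hpos : 0 < ∑ l ∈ range (m * n), (1 - xx m n k r l) *
          (cc n l * (-1 + Real.cos (2 * π * q * l / ((m * n : ℕ) : ℝ)))) := by
        have hz : ∀ l, xx m n k r l = 0 ∧ k ≤ l % n ∧ l % n ≤ n - k → cc n l < 0 := by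
          intro l h
          rw [cc_mod n l hn]
          exact lt_of_le_of_lt (cc_mid n k _ hk h.2.1 h.2.2) hneg
        apply Finset.sum_pos'
        · intro l _
          rcases xx01 m n k r l hk with h | h
          · have := hz l h
            rw [h.1]
            have := Real.cos_le_one (2 * π * q * l / ((m * n : ℕ) : ℝ))
            nlinarith
          · rw [h]; simp
        · have hx0 : ∀ l, k ≤ l → l ≤ n - k → xx m n k r l = 0 := by
            intro l h1 h2
            have d : l / n = 0 := Nat.div_eq_of_lt (by omega)
            have md : l % n = l := Nat.mod_eq_of_lt (by omega)
            unfold xx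
            rw [d, md, if_neg (by omega), if_neg (by omega), if_neg (by omega)]; norm_num
          have hfin : ∀ l, k ≤ l → l ≤ n - k →
              Real.cos (2 * π * q * l / ((m * n : ℕ) : ℝ)) ≠ 1 →
              0 < (1 - xx m n k r l) *
                (cc n l * (-1 + Real.cos (2 * π * q * l / ((m * n : ℕ) : ℝ)))) := by
            intro l h1 h2 h3
            have md : l % n = l := Nat.mod_eq_of_lt (by omega)
            have a := hz l ⟨hx0 l h1 h2, by omega, by omega⟩
            have b := lt_of_le_of_ne (Real.cos_le_one _) h3
            rw [hx0 l h1 h2]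
            nlinarith
          by_cases g1 : Real.cos (2 * π * q * (n / 2 : ℕ) / ((m * n : ℕ) : ℝ)) = 1
          · by_cases g2 : Real.cos (2 * π * q * (n / 2 + 1 : ℕ) / ((m * n : ℕ) : ℝ)) = 1
            · exfalso
              rw [Real.cos_eq_one_iff] at g1 g2
              obtain ⟨a, ha⟩ := g1
              obtain ⟨b, hb⟩ := g2
              have hp := Real.pi_pos.ne'
              have ha' : (a : ℝ) * ((m * n : ℕ) : ℝ) = q * ((n / 2 : ℕ) : ℝ) := by
                rw [eq_div_iff hN0] at ha
                apply mul_left_cancel₀ (show 2 * π ≠ 0 by positivity)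
                linarith
              have hb' : (b : ℝ) * ((m * n : ℕ) : ℝ) = q * ((n / 2 + 1 : ℕ) : ℝ) := by
                rw [eq_div_iff hN0] at hb
                apply mul_left_cancel₀ (show 2 * π ≠ 0 by positivity)
                linarith
              have hq' : (q : ℝ) = ((m * n : ℕ) : ℝ) * ((b - a : ℤ) : ℝ) := by
                rw [Nat.cast_succ] at hb'
                push_cast at *
                linarith
              have hdvd : ((m * n : ℕ) : ℤ) ∣ (q : ℤ) := ⟨b - a, by exact_mod_cast hq'⟩
              rw [Int.natCast_dvd_natCast] at hdvd
              have := Nat.le_of_dvd (by omega) hdvd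
              omega
            · exact ⟨n / 2 + 1, by rw [mem_range]; omega, hfin _ (by omega) (by omega) g2⟩
          · exact ⟨n / 2, by rw [mem_range]; omega, hfin _ (by omega) (by omega) g1⟩
      simp only [sub_mul, one_mul, Finset.sum_sub_distrib, fs] at hpos
      simp only [mul_assoc] at hpos ⊢
      simp
      simp at hpos
      linarith

/-- For `Ñ ≥ 5` with `α_Ñ = 2k_c - 1 - 2 s_{k_c-1}/(s_{k_c} - s_{k_c-1})` and `K_c` the
unique root of `4πK + sin(4πK) - 4 sin(2πK) = 0` in `(1/4, 1/2)`:
`α_Ñ/Ñ ≤ 2K_c + 2/Ñ + 4π/(3Ñ²)`; moreover, for each `m ≥ 1`, the maximum connectivity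
`μ^{(mÑ, m)}` satisfies `μ^{(mÑ, m)} ≤ α_Ñ/Ñ`, and `μ^{(mÑ, m)} → α_Ñ/Ñ` as `m → ∞`. -/
theorem alpha_bound_and_limit (Nt : ℕ) (hNt : 5 ≤ Nt) (s : ℕ → ℝ)
    (hs : ∀ k, s k = ∑ l ∈ Finset.Icc 1 k,
      Real.cos (2 * π * l / Nt) * (-1 + Real.cos (2 * π * l / Nt)))
    (kc : ℕ) (hkc : IsLeast {k | k ∈ Finset.Icc 1 (Nt - 1) ∧ 0 ≤ s k} kc)
    (alpha : ℝ)
    (halpha : alpha = 2 * (kc : ℝ) - 1 - 2 * s (kc - 1) / (s kc - s (kc - 1)))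
    (Kc : ℝ) (hKc : Kc ∈ Set.Ioo (1 / 4 : ℝ) (1 / 2))
    (hKc0 : 4 * π * Kc + Real.sin (4 * π * Kc) - 4 * Real.sin (2 * π * Kc) = 0)
    (mu : ℕ → ℝ)
    (hmu : ∀ m : ℕ, 1 ≤ m →
      IsGreatest
        {μ : ℝ | ∃ x : ℕ → ℝ, feasible (m * Nt) m x ∧
          μ = (∑ l ∈ Finset.Icc 1 (m * Nt - 1), x l) / ((m * Nt : ℝ) - 1)}
        (mu m)) :
    alpha / Nt ≤ 2 * Kc + 2 / Nt + 4 * π / (3 * (Nt : ℝ) ^ 2) ∧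
    (∀ m : ℕ, 1 ≤ m → mu m ≤ alpha / Nt) ∧
    Tendsto mu atTop (nhds (alpha / Nt)) := by
  have hs' : s = fun k => ∑ l ∈ Icc 1 k, ff Nt l := by
    funext k; rw [hs k]; rfl
  subst hs'
  clear hs
  obtain ⟨k2, kn, hneg, h0, hsucc, hf⟩ := kc_facts Nt hNt kc hkc
  simp only [] at halpha
  obtain ⟨σ, hσ⟩ : ∃ σ, σ = ∑ l ∈ Icc 1 (kc - 1), ff Nt l := ⟨_, rfl⟩
  rw [hsucc, add_sub_cancel_left] at halpha
  have hNr : (5 : ℝ) ≤ Nt := by exact_mod_cast hNt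
  have hknr : (2 * kc + 1 : ℝ) ≤ Nt := by exact_mod_cast kn
  have hk2r : (2 : ℝ) ≤ kc := by exact_mod_cast k2
  have hp := Real.pi_pos
  obtain ⟨θ, hθ⟩ : ∃ θ, θ = - σ / ff Nt kc := ⟨_, rfl⟩
  have hθ0 : 0 < θ := by rw [hθ]; apply div_pos <;> linarith
  have hθ1 : θ ≤ 1 := by rw [hθ, div_le_one hf]; linarith
  have hal : alpha = 2 * kc - 1 + 2 * θ := by
    rw [halpha, hθ, hσ]; ring
  have hupper : ∀ m : ℕ, 1 ≤ m → mu m ≤ alpha / Nt := by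
    intro m hm
    obtain ⟨x, hx, hxe⟩ := (hmu m hm).1
    have hm' : (1 : ℝ) ≤ m := by exact_mod_cast hm
    have h := upper Nt kc (by omega) kn hf m hm x hx
    rw [← halpha] at h
    rw [hxe, div_le_div_iff₀ (by nlinarith) (by linarith)]
    have := mul_le_mul_of_nonneg_right h (show (0:ℝ) ≤ Nt by linarith)
    linarith
  refine ⟨?_, hupper, ?_⟩
  · have h := part1 Nt hNt (kc - 1) (by omega) (2 * π * Kc)
      ⟨by nlinarith [hKc.1], by nlinarith [hKc.2]⟩
      (by rw [← hKc0]; ring_nf) hneg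
    rw [Nat.cast_sub (by omega)] at h
    push_cast at h
    have hN0 : (0 : ℝ) < Nt := by linarith
    have h2 : (kc : ℝ) - 1 / 2 < Kc * Nt + 2 * π / (3 * Nt) := by
      have e : 2 * π * Kc + (2 * π / Nt) ^ 2 / 3 = (Kc * Nt + 2 * π / (3 * Nt)) * (2 * π / Nt) := by
        field_simp
      rw [e] at h
      have := lt_of_mul_lt_mul_right h (by positivity)
      linarith
    have h3 : alpha ≤ 2 * (Kc * Nt + 2 * π / (3 * Nt)) + 2 := by linarith
    rw [div_le_iff₀ hN0]
    refine h3.trans (le_of_eq ?_)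
    field_simp
    ring
  · have hlim : Tendsto (fun m : ℕ => alpha / Nt - 5 / (m : ℝ)) atTop (nhds (alpha / Nt)) := by
      have := (tendsto_const_div_atTop_nhds_zero_nat (5 : ℝ)).const_sub (alpha / Nt)
      simpa using this
    refine tendsto_of_tendsto_of_tendsto_of_le_of_le' hlim tendsto_const_nhds ?_ ?_
    · obtain ⟨M, hM⟩ := exists_nat_gt (3 / θ)
      filter_upwards [eventually_ge_atTop (max M 1)] with m hm
      have hm1 : 1 ≤ m := le_trans (le_max_right _ _) hm
      have hmM : (M : ℝ) ≤ m := by exact_mod_cast le_trans (le_max_left _ _) hm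
      have hm' : (1 : ℝ) ≤ m := by exact_mod_cast hm1
      have hθm : 3 < θ * m := by
        rw [div_lt_iff₀ hθ0] at hM
        nlinarith
      have c1 := Nat.le_ceil (θ * m)
      have c2 := Nat.ceil_lt_add_one (show 0 ≤ θ * m by linarith)
      have c3 : 2 ≤ ⌈θ * m⌉₊ := by
        have : (2 : ℝ) ≤ ⌈θ * m⌉₊ := by linarith
        exact_mod_cast this
      obtain ⟨r, hr⟩ : ∃ r, ⌈θ * m⌉₊ = r + 2 := ⟨⌈θ * m⌉₊ - 2, by omega⟩
      rw [hr] at c1 c2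
      push_cast at c1 c2
      have hrm : r + 2 ≤ m := by
        have : (r : ℝ) + 1 < m := by nlinarith
        have : r + 1 < m := by exact_mod_cast this
        omega
      have hfe := xx_feasible m Nt kc r (by omega) kn hNt hrm hf (by
        rw [← hσ]
        have e : σ = - (θ * ff Nt kc) := by rw [hθ]; field_simp
        rw [e]
        nlinarith)
      have hle := (hmu m hm1).2 ⟨_, hfe, rfl⟩
      have hsum := xx_sum m Nt kc r (by omega) kn hrm (fun _ => 1) (fun _ _ => rfl) (fun _ _ => rfl)
      have hx0 : xx m Nt kc r 0 = 1 := by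
        rcases xx01 m Nt kc r 0 kn with h | h
        · simp at h; omega
        · exact h
      rw [sum_Icc_range _ (Nat.mul_pos (by omega) (by omega)), hx0] at hle
      simp at hsum
      rw [hsum, Nat.cast_sub (by omega)] at hle
      refine le_trans ?_ hle
      have hD : (0 : ℝ) < m * Nt - 1 := by nlinarith
      rw [le_div_iff₀ hD]
      have a1 : alpha / Nt * (m * Nt - 1) ≤ alpha * m := by
        have : 0 ≤ alpha / Nt := by apply div_nonneg <;> linarith
        have e : alpha / Nt * (m * Nt - 1) = alpha * m - alpha / Nt := by field_simp
        linarith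
      have a2 : 5 ≤ 5 / (m : ℝ) * (m * Nt - 1) := by
        rw [div_mul_eq_mul_div, le_div_iff₀ (by linarith)]
        nlinarith
      rw [sub_mul]
      have a3 : alpha * m = m * (2 * kc - 1) + 2 * (θ * m) := by rw [hal]; ring
      rw [a3] at a1
      push_cast
      generalize alpha / Nt * (m * Nt - 1) = A at a1 ⊢
      generalize 5 / (m : ℝ) * (m * Nt - 1) = B at a2 ⊢
      linarith
    · filter_upwards [eventually_ge_atTop 1] with m hm
      exact hupper m hm
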